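/- Strong completeness of ELD: for every formula φ and every set Φ of formulas of the language ELD, if Φ semantically entails φ over similarity models (every pointed similarity model satisfying all formulas of Φ satisfies φ), then Φ ⊢_ELD φ (i.e., there is a finite subset {ψ_1,…,ψ_n} ⊆ Φ such that (ψ_1 ∧ … ∧ ψ_n) → φ is a theorem of ELD). -/

import Mathlib

/-- Formulas of the language ELD over a set `Ag` of agents, with
propositional variables drawn from the countably infinite set `ℕ`.  Groups
are nonempty finite sets of agents. -/
inductive Formula (Ag : Type) : Type
  | atom : ℕ → Formula Ag
  | neg  : Formula Ag → Formula Ag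
  | impl : Formula Ag → Formula Ag → Formula Ag
  | K    : Ag → Formula Ag → Formula Ag
  | D    : (G : Finset Ag) → G.Nonempty → Formula Ag → Formula Ag

/-- A similarity model `(W, A, E, C, ν)`. -/
structure SimModel (Ag : Type) where
  W : Type
  A : Type
  w_nonempty : Nonempty W
  E : W → W → Set A
  Cap : Ag → Set A
  val : W → Set ℕ
  positivity : ∀ s t : W, E s t = Set.univ → s = t
  symmetry : ∀ s t : W, E s t = E t s

/-- Satisfaction on similarity models. -/
def SimModel.sat {Ag : Type} (M : SimModel Ag) : M.W → Formula Ag → Prop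
  | s, .atom p => p ∈ M.val s
  | s, .neg φ => ¬ M.sat s φ
  | s, .impl φ ψ => M.sat s φ → M.sat s ψ
  | s, .K a φ => ∀ t, M.Cap a ⊆ M.E s t → M.sat t φ
  | s, .D G _ φ => ∀ t, (⋃ a ∈ G, M.Cap a) ⊆ M.E s t → M.sat t φ

namespace Formula
/-- Conjunction, defined from the primitive connectives. -/
def and {Ag : Type} (φ ψ : Formula Ag) : Formula Ag := .neg (φ.impl ψ.neg)
/-- A fixed tautology. -/
def top {Ag : Type} : Formula Ag := (atom 0).impl (atom 0)
/-- Biconditional, defined from the primitive connectives. -/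
def iff {Ag : Type} (φ ψ : Formula Ag) : Formula Ag := (φ.impl ψ).and (ψ.impl φ)
end Formula

/-- `φ` is a propositional tautology: it evaluates to `true` under every
assignment of truth values to formulas that respects negation and implication
(thereby treating atoms and modal formulas as propositional atoms). -/
def IsTautology {Ag : Type} (φ : Formula Ag) : Prop :=
  ∀ v : Formula Ag → Bool,
    (∀ ψ : Formula Ag, v ψ.neg = !v ψ) →
    (∀ ψ χ : Formula Ag, v (ψ.impl χ) = (!v ψ || v χ)) →
    v φ = true

/-- The axiomatic system ELD: the least set of formulas containing all propositional tautologies, closed under modus ponens and necessitation for each `K_a`, and containing the axiom schemes K, B, KD, D1, D2 and BD. -/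
inductive Prov {Ag : Type} : Formula Ag → Prop
  | taut {φ : Formula Ag} : IsTautology φ → Prov φ
  | mp {φ ψ : Formula Ag} : Prov (φ.impl ψ) → Prov φ → Prov ψ
  | nec {φ : Formula Ag} (a : Ag) : Prov φ → Prov (.K a φ)
  | kK {φ ψ : Formula Ag} (a : Ag) :
      Prov ((Formula.K a (φ.impl ψ)).impl ((Formula.K a φ).impl (.K a ψ)))
  | axB {φ : Formula Ag} (a : Ag) :
      Prov (φ.impl (.K a (Formula.neg (.K a φ.neg))))
  | kD {φ ψ : Formula Ag} (G : Finset Ag) (hG : G.Nonempty) :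
      Prov ((Formula.D G hG (φ.impl ψ)).impl ((Formula.D G hG φ).impl (.D G hG ψ)))
  | d1 {φ : Formula Ag} (a : Ag) :
      Prov ((Formula.D {a} (Finset.singleton_nonempty a) φ).iff (.K a φ))
  | d2 {φ : Formula Ag} (G H : Finset Ag) (hG : G.Nonempty) (hH : H.Nonempty)
      (hGH : G ⊆ H) : Prov ((Formula.D G hG φ).impl (.D H hH φ))
  | bd {φ : Formula Ag} (G : Finset Ag) (hG : G.Nonempty) :
      Prov (φ.impl (.D G hG (Formula.neg (.D G hG φ.neg))))

inductive Der {Ag : Type} (Γ : Set (Formula Ag)) : Formula Ag → Prop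
  | hyp {φ : Formula Ag} : φ ∈ Γ → Der Γ φ
  | thm {φ : Formula Ag} : Prov φ → Der Γ φ
  | mp {φ ψ : Formula Ag} : Der Γ (φ.impl ψ) → Der Γ φ → Der Γ ψ

theorem foldr_val {Ag : Type} (v : Formula Ag → Bool)
    (h1 : ∀ ψ : Formula Ag, v ψ.neg = !v ψ)
    (h2 : ∀ ψ χ : Formula Ag, v (ψ.impl χ) = (!v ψ || v χ)) (L : List (Formula Ag)) :
    v (L.foldr Formula.and Formula.top) = true ↔ ∀ ψ ∈ L, v ψ = true := by
  induction L with
  | nil => simp [Formula.top, h2]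
  | cons a L ih => simp [Formula.and, h1, h2, ← ih]

theorem Der.toList {Ag : Type} {Γ : Set (Formula Ag)} {φ : Formula Ag} (h : Der Γ φ) :
    ∃ L : List (Formula Ag), (∀ ψ ∈ L, ψ ∈ Γ) ∧
      Prov ((L.foldr Formula.and Formula.top).impl φ) := by
  induction h with
  | @hyp φ h =>
    refine ⟨[φ], by simpa using h, Prov.taut ?_⟩
    intro v h1 h2
    have := foldr_val v h1 h2 [φ]
    rw [h2]
    cases h3 : v (List.foldr Formula.and Formula.top [φ]) <;> simp_all
  | @thm φ h =>
    refine ⟨[], by simp, Prov.mp (Prov.taut ?_) h⟩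
    intro v h1 h2
    simp only [h2]
    cases v φ <;> simp
  | @mp φ ψ _ _ ih1 ih2 =>
    obtain ⟨L1, m1, p1⟩ := ih1
    obtain ⟨L2, m2, p2⟩ := ih2
    refine ⟨L1 ++ L2, ?_, Prov.mp (Prov.mp (Prov.taut ?_) p1) p2⟩
    · intro χ hχ
      rcases List.mem_append.1 hχ with h | h
      exacts [m1 _ h, m2 _ h]
    · intro v h1 h2
      have e1 := foldr_val v h1 h2 L1
      have e2 := foldr_val v h1 h2 L2
      have e3 := foldr_val v h1 h2 (L1 ++ L2)
      have e : v ((L1 ++ L2).foldr Formula.and Formula.top) = true →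
          v (L1.foldr Formula.and Formula.top) = true ∧
          v (L2.foldr Formula.and Formula.top) = true := by
        rw [e1, e2, e3]
        intro h
        exact ⟨fun ψ hψ => h ψ (by simp [hψ]), fun ψ hψ => h ψ (by simp [hψ])⟩
      simp only [h2]
      generalize v ((L1 ++ L2).foldr Formula.and Formula.top) = x at *
      generalize v (L1.foldr Formula.and Formula.top) = y at *
      generalize v (L2.foldr Formula.and Formula.top) = z at *
      clear e1 e2 e3
      revert e
      cases x <;> cases y <;> cases z <;> cases v φ <;> cases v ψ <;> simp

theorem Der.ded {Ag : Type} {Γ : Set (Formula Ag)} {χ φ : Formula Ag}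
    (h : Der (insert χ Γ) φ) : Der Γ (χ.impl φ) := by
  have w : ∀ ψ : Formula Ag, Der Γ ψ → Der Γ (χ.impl ψ) := by
    intro ψ hψ
    refine Der.mp (Der.thm (Prov.taut ?_)) hψ
    intro v h1 h2
    simp only [h2]
    cases v ψ <;> simp
  induction h with
  | @hyp φ h =>
    rcases h with rfl | h
    · refine Der.thm (Prov.taut ?_)
      intro v h1 h2
      simp [h2]
    · exact w _ (Der.hyp h)
  | thm h => exact w _ (Der.thm h)
  | @mp φ ψ _ _ ih1 ih2 =>
    refine Der.mp (Der.mp (Der.thm (Prov.taut ?_)) ih1) ih2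
    intro v h1 h2
    simp only [h2]
    cases v χ <;> cases v φ <;> cases v ψ <;> simp

theorem Der.mono {Ag : Type} {Γ Δ : Set (Formula Ag)} {φ : Formula Ag}
    (h : Der Γ φ) (hs : Γ ⊆ Δ) : Der Δ φ := by
  induction h with
  | hyp h => exact Der.hyp (hs h)
  | thm h => exact Der.thm h
  | mp _ _ i1 i2 => exact Der.mp i1 i2

theorem Der.chain {Ag : Type} {c : Set (Set (Formula Ag))} (hc : IsChain (· ⊆ ·) c)
    (hne : c.Nonempty) {φ : Formula Ag} (h : Der (⋃₀ c) φ) : ∃ Γ ∈ c, Der Γ φ := by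
  induction h with
  | hyp h =>
    obtain ⟨Γ, h1, h2⟩ := h
    exact ⟨Γ, h1, Der.hyp h2⟩
  | thm h =>
    obtain ⟨Γ, h1⟩ := hne
    exact ⟨Γ, h1, Der.thm h⟩
  | mp _ _ i1 i2 =>
    obtain ⟨Γ, m1, d1⟩ := i1
    obtain ⟨Δ, m2, d2⟩ := i2
    rcases hc.total m1 m2 with hs | hs
    · exact ⟨Δ, m2, Der.mp (d1.mono hs) d2⟩
    · exact ⟨Γ, m1, Der.mp d1 (d2.mono hs)⟩

structure MCS {Ag : Type} (Γ : Set (Formula Ag)) : Prop where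
  thm : ∀ φ, Prov φ → φ ∈ Γ
  mp : ∀ φ ψ : Formula Ag, φ.impl ψ ∈ Γ → φ ∈ Γ → ψ ∈ Γ
  neg : ∀ φ : Formula Ag, φ.neg ∈ Γ ↔ φ ∉ Γ

theorem lindenbaum {Ag : Type} {Γ : Set (Formula Ag)} {φ : Formula Ag} (h : ¬ Der Γ φ) :
    ∃ Δ : Set (Formula Ag), MCS Δ ∧ Γ ⊆ Δ ∧ φ ∉ Δ := by
  obtain ⟨Δ, hs, hm⟩ := zorn_subset_nonempty {Γ' : Set (Formula Ag) | ¬ Der Γ' φ}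
    (by
      intro c hcs hc hne
      refine ⟨⋃₀ c, ?_, fun s hs => Set.subset_sUnion_of_mem hs⟩
      intro hd
      obtain ⟨Γ', m, d⟩ := Der.chain hc hne hd
      exact hcs m d) Γ h
  have hΔ : ¬ Der Δ φ := hm.prop
  have ext : ∀ ψ, ψ ∉ Δ → Der Δ (ψ.impl φ) := by
    intro ψ hψ
    by_contra hn
    have : ¬ Der (insert ψ Δ) φ := fun hd => hn hd.ded
    exact hψ (hm.le_of_ge this (Set.subset_insert ψ Δ) (Set.mem_insert ψ Δ))
  have cl : ∀ ψ, Der Δ ψ → ψ ∈ Δ := by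
    intro ψ hψ
    by_contra hn
    exact hΔ (Der.mp (ext ψ hn) hψ)
  refine ⟨Δ, ⟨fun ψ hψ => cl _ (Der.thm hψ),
    fun ψ χ h1 h2 => cl _ (Der.mp (Der.hyp h1) (Der.hyp h2)), ?_⟩, hs, fun hh => hΔ (Der.hyp hh)⟩
  intro ψ
  constructor
  · intro h1 h2
    apply hΔ
    refine Der.mp (Der.mp (Der.thm (Prov.taut ?_)) (Der.hyp h1)) (Der.hyp h2)
    intro v e1 e2
    simp only [e1, e2]
    cases v ψ <;> simp
  · intro h1
    by_contra h2
    apply hΔ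
    refine Der.mp (Der.mp (Der.thm (Prov.taut ?_)) (ext _ h1)) (ext _ h2)
    intro v e1 e2
    simp only [e1, e2]
    cases v ψ <;> cases v φ <;> simp

theorem Prov.necD {Ag : Type} {φ : Formula Ag} (G : Finset Ag) (hG : G.Nonempty)
    (h : Prov φ) : Prov (Formula.D G hG φ) := by
  have hG' := hG
  obtain ⟨a, ha⟩ := hG'
  refine Prov.mp (Prov.d2 {a} G (Finset.singleton_nonempty a) hG (by simpa using ha)) ?_
  refine Prov.mp (Prov.mp (Prov.taut ?_) (Prov.d1 (φ := φ) a)) (Prov.nec a h)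
  intro v e1 e2
  simp only [e1, e2, Formula.iff, Formula.and]
  cases v (Formula.K a φ) <;>
    cases v (Formula.D {a} (Finset.singleton_nonempty a) φ) <;> simp

def CanR {Ag : Type} (G : Finset Ag) (s t : Set (Formula Ag)) : Prop :=
  ∀ (hG : G.Nonempty) (φ : Formula Ag), Formula.D G hG φ ∈ s → φ ∈ t

theorem CanR.symm {Ag : Type} {G : Finset Ag} {s t : Set (Formula Ag)} (hs : MCS s)
    (ht : MCS t) (h : CanR G s t) : CanR G t s := by
  intro hG χ hχ
  by_contra hn
  have h1 := (hs.neg χ).2 hn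
  have h2 := h hG _ (hs.mp _ _ (hs.thm _ (Prov.bd G hG)) h1)
  refine (ht.neg _).1 h2 ?_
  refine ht.mp _ _ (ht.mp _ _ (ht.thm _ (Prov.kD G hG)) (ht.thm _ (Prov.necD G hG ?_))) hχ
  refine Prov.taut ?_
  intro v e1 e2
  simp only [e1, e2]
  cases v χ <;> simp

theorem existence {Ag : Type} {G : Finset Ag} (hG : G.Nonempty) {s : Set (Formula Ag)}
    (hs : MCS s) {φ : Formula Ag} (h : Formula.D G hG φ ∉ s) :
    ∃ t, MCS t ∧ CanR G s t ∧ φ ∉ t := by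
  have key : ∀ ψ, Der {χ | Formula.D G hG χ ∈ s} ψ → Formula.D G hG ψ ∈ s := by
    intro ψ hψ
    induction hψ with
    | hyp h => exact h
    | thm h => exact hs.thm _ (Prov.necD G hG h)
    | mp _ _ i1 i2 => exact hs.mp _ _ (hs.mp _ _ (hs.thm _ (Prov.kD G hG)) i1) i2
  obtain ⟨t, h1, h2, h3⟩ := lindenbaum (fun hd => h (key _ hd))
  exact ⟨t, h1, fun _ χ hχ => h2 hχ, h3⟩

open Classical in
noncomputable def canModel (Ag : Type) (ne : Nonempty {Γ : Set (Formula Ag) // MCS Γ}) :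
    SimModel Ag where
  W := {Γ : Set (Formula Ag) // MCS Γ} × Finset Ag
  A := Option Ag
  w_nonempty := ⟨(ne.some, ∅)⟩
  E := fun x y => {o | ∃ a, o = some a ∧ a ∈ symmDiff x.2 y.2 ∧
    CanR (symmDiff x.2 y.2) x.1.1 y.1.1}
  Cap := fun a => {some a}
  val := fun x => {p | Formula.atom p ∈ x.1.1}
  positivity := by
    intro s t h
    have : (none : Option Ag) ∈ (Set.univ : Set (Option Ag)) := trivial
    rw [← h] at this
    obtain ⟨a, ha, _⟩ := this
    cases ha
  symmetry := by
    intro s t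
    ext o
    simp only [Set.mem_ofPred_eq]
    rw [symmDiff_comm t.2 s.2]
    exact ⟨fun ⟨a, h1, h2, h3⟩ => ⟨a, h1, h2, h3.symm s.1.2 t.1.2⟩,
      fun ⟨a, h1, h2, h3⟩ => ⟨a, h1, h2, h3.symm t.1.2 s.1.2⟩⟩

open Classical in
theorem truthD {Ag : Type} (ne : Nonempty {Γ : Set (Formula Ag) // MCS Γ}) (φ : Formula Ag)
    (ih : ∀ x : (canModel Ag ne).W, (canModel Ag ne).sat x φ ↔ φ ∈ x.1.1)
    (G : Finset Ag) (hG : G.Nonempty) (x : (canModel Ag ne).W) :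
    (canModel Ag ne).sat x (Formula.D G hG φ) ↔ Formula.D G hG φ ∈ x.1.1 := by
  simp only [SimModel.sat]
  constructor
  · intro h
    by_contra hn
    obtain ⟨t, h1, h2, h3⟩ := existence hG x.1.2 hn
    refine h3 ((ih (⟨t, h1⟩, symmDiff x.2 G)).1 (h _ ?_))
    intro o ho
    simp only [Set.mem_iUnion] at ho
    obtain ⟨a, ha, hoa⟩ := ho
    have e : symmDiff x.2 (symmDiff x.2 G) = G := symmDiff_symmDiff_cancel_left _ _
    refine ⟨a, hoa, ?_, ?_⟩
    · rw [e]; exact ha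
    · rw [e]; exact h2
  · intro h y hy
    have sub : ∀ a ∈ G, a ∈ symmDiff x.2 y.2 ∧ CanR (symmDiff x.2 y.2) x.1.1 y.1.1 := by
      intro a ha
      obtain ⟨b, hb, h1, h2⟩ := hy (Set.mem_biUnion (t := (canModel Ag ne).Cap)
        ha (show some a ∈ ({some a} : Set (Option Ag)) from rfl))
      cases hb
      exact ⟨h1, h2⟩
    have hG' := hG
    obtain ⟨a, ha⟩ := hG'
    refine (ih y).2 ((sub a ha).2 ⟨a, (sub a ha).1⟩ φ ?_)
    exact x.1.2.mp _ _ (x.1.2.thm _ (Prov.d2 G _ hG _ (fun b hb => (sub b hb).1))) h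

theorem truth {Ag : Type} (ne : Nonempty {Γ : Set (Formula Ag) // MCS Γ}) (φ : Formula Ag) :
    ∀ x : (canModel Ag ne).W, (canModel Ag ne).sat x φ ↔ φ ∈ x.1.1 := by
  induction φ with
  | atom p => intro x; simp only [SimModel.sat]; rfl
  | neg φ ih => intro x; simp only [SimModel.sat]; rw [ih, x.1.2.neg]
  | impl φ ψ ih1 ih2 =>
    intro x
    simp only [SimModel.sat]
    rw [ih1, ih2]
    have m := x.1.2
    constructor
    · intro h
      by_cases hφ : φ ∈ x.1.1
      · refine m.mp _ _ (m.thm _ (Prov.taut ?_)) (h hφ)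
        intro v e1 e2
        simp only [e2]
        cases v ψ <;> simp
      · refine m.mp _ _ (m.thm _ (Prov.taut ?_)) ((m.neg _).2 hφ)
        intro v e1 e2
        simp only [e1, e2]
        cases v φ <;> simp
    · exact m.mp _ _
  | K a φ ih =>
    intro x
    have m := x.1.2
    have h := truthD ne φ ih {a} (Finset.singleton_nonempty a) x
    have h1 : (canModel Ag ne).sat x (Formula.K a φ) ↔
        (canModel Ag ne).sat x (Formula.D {a} (Finset.singleton_nonempty a) φ) := by
      simp [SimModel.sat]
    rw [h1, h]
    constructor
    · refine m.mp _ _ (m.thm _ (Prov.mp (Prov.taut ?_) (Prov.d1 (φ := φ) a)))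
      intro v e1 e2
      simp only [e1, e2, Formula.iff, Formula.and]
      cases v (Formula.K a φ) <;>
        cases v (Formula.D {a} (Finset.singleton_nonempty a) φ) <;> simp
    · refine m.mp _ _ (m.thm _ (Prov.mp (Prov.taut ?_) (Prov.d1 (φ := φ) a)))
      intro v e1 e2
      simp only [e1, e2, Formula.iff, Formula.and]
      cases v (Formula.K a φ) <;>
        cases v (Formula.D {a} (Finset.singleton_nonempty a) φ) <;> simp
  | D G hG φ ih => exact truthD ne φ ih G hG

/-- strong completeness of ELD: if `Φ` semantically entails
`φ` over similarity models, then some finite conjunction `ψ₁ ∧ … ∧ ψₙ` of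
members of `Φ` is such that `(ψ₁ ∧ … ∧ ψₙ) → φ` is a theorem of ELD. -/
theorem stmt_16 {Ag : Type} [Fintype Ag] [Nonempty Ag]
    (Φ : Set (Formula Ag)) (φ : Formula Ag)
    (h : ∀ (M : SimModel Ag) (s : M.W), (∀ ψ ∈ Φ, M.sat s ψ) → M.sat s φ) :
    ∃ L : List (Formula Ag), (∀ ψ ∈ L, ψ ∈ Φ) ∧
      Prov ((L.foldr Formula.and Formula.top).impl φ) := by
  apply Der.toList
  by_contra hn
  obtain ⟨Δ, h1, h2, h3⟩ := lindenbaum hn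
  have ne : Nonempty {Γ : Set (Formula Ag) // MCS Γ} := ⟨⟨Δ, h1⟩⟩
  exact h3 ((truth ne φ (⟨Δ, h1⟩, ∅)).1 (h (canModel Ag ne) (⟨Δ, h1⟩, ∅)
    (fun ψ hψ => (truth ne ψ (⟨Δ, h1⟩, ∅)).2 (h2 hψ))))
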